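/- arXiv:2506.01162 — 2 statements merged into one kernel-verified Lean document; each statement's English description precedes it below -/
import Mathlib

section
/- Let P be a probability measure on a measurable space X, let H_1, ..., H_n be probability measures with densities with respect to a common sigma-finite dominating measure, let OPT := min over j of TV(H_j, P) achieved by H_{i*}, and define the maximum semi-distance W(H_j) := max over i in [n] of w_i(H_j). If Ĥ = H_k minimizes W(H_j) over all j in [n], then w_{i*}(Ĥ) <= OPT, and consequently TV(Ĥ, P) <= 3·OPT. -/
/-!
The semi-distance tests a hypothesis and `P` on one measurable set, so it is at most their total
variation distance; hence `W(H_{i*}) ≤ OPT`, and minimality of `W k` gives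
`w_{i*}(H_k) ≤ W k ≤ W(H_{i*}) ≤ OPT`. For the second claim, the Scheffé set `S` of `H_{i*}` and
`H_k` attains the total variation distance between the two (`abs_sub_le_scheffe`), so for every
measurable `A`
`|H_k A - P A| ≤ |H_k S - H_{i*} S| + |H_{i*} A - P A|
  ≤ |H_k S - P S| + |P S - H_{i*} S| + |H_{i*} A - P A|`,
and each of the three terms is at most `OPT`.
-/

open MeasureTheory ENNReal

/-- Total variation distance: supremum over measurable sets of the absolute
difference of the masses. -/
noncomputable def tvDist {X : Type*} [MeasurableSpace X]
    (P Q : Measure X) : ℝ :=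
  ⨆ S : {S : Set X // MeasurableSet S}, |(P S.1).toReal - (Q S.1).toReal|

/-- The Scheffé set `S_{i,j}` of the hypotheses with densities `h i`, `h j`. -/
def scheffeSet {X : Type*} {n : ℕ} (h : Fin n → X → ℝ≥0∞) (i j : Fin n) :
    Set X :=
  if i ≤ j then {x | h i x < h j x} else {x | h j x < h i x}

/-- The semi-distance `w_i(H_j) := |H_j(S_{i,j}) - P(S_{i,j})|`. -/
noncomputable def semiDist {X : Type*} [MeasurableSpace X] {n : ℕ}
    (h : Fin n → X → ℝ≥0∞) (H : Fin n → Measure X) (P : Measure X)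
    (i j : Fin n) : ℝ :=
  |(H j (scheffeSet h i j)).toReal - (P (scheffeSet h i j)).toReal|

theorem abs_sub_le_tvDist {X : Type*} [MeasurableSpace X] (P Q : Measure X)
    [IsProbabilityMeasure P] [IsProbabilityMeasure Q] {S : Set X} (hS : MeasurableSet S) :
    |P.real S - Q.real S| ≤ tvDist P Q := by
  refine le_ciSup (f := fun S : {S : Set X // MeasurableSet S} =>
    |(P S.1).toReal - (Q S.1).toReal|) ⟨1, ?_⟩ ⟨S, hS⟩
  rintro _ ⟨T, rfl⟩
  have h1 : P.real T.1 ≤ 1 := measureReal_le_one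
  have h2 : Q.real T.1 ≤ 1 := measureReal_le_one
  have h3 : 0 ≤ P.real T.1 := measureReal_nonneg
  have h4 : 0 ≤ Q.real T.1 := measureReal_nonneg
  simp only [Measure.real] at h1 h2 h3 h4
  exact abs_le.2 ⟨by linarith, by linarith⟩

theorem withDensity_real_le {X : Type*} [MeasurableSpace X] {μ : Measure X}
    {f g : X → ℝ≥0∞} [IsFiniteMeasure (μ.withDensity g)]
    {B : Set X} (hB : MeasurableSet B) (hfg : ∀ x ∈ B, f x ≤ g x) :
    (μ.withDensity f).real B ≤ (μ.withDensity g).real B := by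
  refine ENNReal.toReal_mono (measure_ne_top _ _) ?_
  rw [withDensity_apply _ hB, withDensity_apply _ hB]
  exact setLIntegral_mono' hB hfg

/-- Among measurable sets, `{f < g}` maximizes the signed difference of the masses: cutting a set
`A` along `{f < g}`, the part outside contributes at most zero, and the missing part of `{f < g}`
would contribute at least zero. -/
theorem sub_le_scheffe {X : Type*} [MeasurableSpace X] {μ : Measure X}
    {f g : X → ℝ≥0∞} (hf : Measurable f) (hg : Measurable g)
    [IsProbabilityMeasure (μ.withDensity f)] [IsProbabilityMeasure (μ.withDensity g)]
    {A : Set X} (hA : MeasurableSet A) :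
    (μ.withDensity g).real A - (μ.withDensity f).real A ≤
      (μ.withDensity g).real {x | f x < g x} - (μ.withDensity f).real {x | f x < g x} := by
  have hS : MeasurableSet {x | f x < g x} := measurableSet_lt hf hg
  set S := {x | f x < g x} with hSdef
  have h1 : (μ.withDensity g).real (A \ S) ≤ (μ.withDensity f).real (A \ S) :=
    withDensity_real_le (hA.diff hS) fun x hx => not_lt.1 hx.2
  have h2 : (μ.withDensity f).real (S \ A) ≤ (μ.withDensity g).real (S \ A) :=
    withDensity_real_le (hS.diff hA) fun x hx => le_of_lt hx.1
  have e1 := measureReal_inter_add_sdiff (μ := μ.withDensity g) (s := A) hS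
  have e2 := measureReal_inter_add_sdiff (μ := μ.withDensity f) (s := A) hS
  have e3 := measureReal_inter_add_sdiff (μ := μ.withDensity g) (s := S) hA
  have e4 := measureReal_inter_add_sdiff (μ := μ.withDensity f) (s := S) hA
  rw [Set.inter_comm S A] at e3 e4
  linarith

/-- The set `{f < g}` attains the total variation distance. The two signs of the difference are
`sub_le_scheffe` for `A` and for its complement. -/
theorem abs_sub_le_scheffe {X : Type*} [MeasurableSpace X] {μ : Measure X}
    {f g : X → ℝ≥0∞} (hf : Measurable f) (hg : Measurable g)
    [IsProbabilityMeasure (μ.withDensity f)] [IsProbabilityMeasure (μ.withDensity g)]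
    {A : Set X} (hA : MeasurableSet A) :
    |(μ.withDensity g).real A - (μ.withDensity f).real A| ≤
      |(μ.withDensity g).real {x | f x < g x} - (μ.withDensity f).real {x | f x < g x}| := by
  refine le_trans (abs_le'.2 ⟨sub_le_scheffe hf hg hA, ?_⟩) (le_abs_self _)
  have h1 := sub_le_scheffe (μ := μ) hf hg hA.compl
  rw [probReal_compl_eq_one_sub hA, probReal_compl_eq_one_sub hA] at h1
  linarith

theorem measurableSet_scheffeSet {X : Type*} [MeasurableSpace X] {n : ℕ}
    {h : Fin n → X → ℝ≥0∞} (hmeas : ∀ i, Measurable (h i)) (i j : Fin n) :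
    MeasurableSet (scheffeSet h i j) := by
  unfold scheffeSet
  split_ifs
  · exact measurableSet_lt (hmeas i) (hmeas j)
  · exact measurableSet_lt (hmeas j) (hmeas i)

/-- Both orientations of the inequality defining the Scheffé set attain the total variation
distance, so the case distinction in `scheffeSet` does not matter here. -/
theorem abs_sub_le_scheffeSet {X : Type*} [MeasurableSpace X] {μ : Measure X} {n : ℕ}
    {H : Fin n → Measure X} [∀ i, IsProbabilityMeasure (H i)]
    {h : Fin n → X → ℝ≥0∞} (hmeas : ∀ i, Measurable (h i))
    (hdens : ∀ i, H i = μ.withDensity (h i)) (i j : Fin n)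
    {A : Set X} (hA : MeasurableSet A) :
    |(H j).real A - (H i).real A| ≤
      |(H j).real (scheffeSet h i j) - (H i).real (scheffeSet h i j)| := by
  have : ∀ i, IsProbabilityMeasure (μ.withDensity (h i)) := fun i => hdens i ▸ inferInstance
  rw [hdens i, hdens j]
  unfold scheffeSet
  split_ifs
  · exact abs_sub_le_scheffe (hmeas i) (hmeas j) hA
  · rw [abs_sub_comm, abs_sub_comm (Measure.real _ {x | h j x < h i x})]
    exact abs_sub_le_scheffe (hmeas j) (hmeas i) hA

/-- If `Ĥ = H k` minimizes the maximum semi-distance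
`W(H_j) := max_i w_i(H_j)`, then `w_{i*}(Ĥ) ≤ OPT` and `TV(Ĥ, P) ≤ 3·OPT`. -/
theorem mde_three_opt {X : Type*} [MeasurableSpace X]
    (μ : Measure X) [SigmaFinite μ] {n : ℕ} (hn : 0 < n)
    (H : Fin n → Measure X) [∀ i, IsProbabilityMeasure (H i)]
    (P : Measure X) [IsProbabilityMeasure P]
    (h : Fin n → X → ℝ≥0∞) (hmeas : ∀ i, Measurable (h i))
    (hdens : ∀ i, H i = μ.withDensity (h i))
    (istar : Fin n) (hopt : ∀ j, tvDist (H istar) P ≤ tvDist (H j) P)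
    (W : Fin n → ℝ)
    (hW : ∀ j, W j = ⨆ i : Fin n, semiDist h H P i j)
    (k : Fin n) (hk : ∀ j, W k ≤ W j) :
    semiDist h H P istar k ≤ tvDist (H istar) P ∧
      tvDist (H k) P ≤ 3 * tvDist (H istar) P := by
  have hsemi : semiDist h H P istar k ≤ tvDist (H istar) P := by
    have : Nonempty (Fin n) := ⟨istar⟩
    calc semiDist h H P istar k
        ≤ W k := hW k ▸ le_ciSup (Set.finite_range fun i => semiDist h H P i k).bddAbove istar
      _ ≤ W istar := hk istar
      _ ≤ tvDist (H istar) P :=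
          hW istar ▸ ciSup_le fun i => abs_sub_le_tvDist _ _ (measurableSet_scheffeSet hmeas i istar)
  refine ⟨hsemi, ?_⟩
  have : Nonempty {S : Set X // MeasurableSet S} := ⟨⟨∅, MeasurableSet.empty⟩⟩
  refine ciSup_le fun ⟨A, hA⟩ => ?_
  change |(H k).real A - P.real A| ≤ _
  change |(H k).real (scheffeSet h istar k) - P.real (scheffeSet h istar k)| ≤ _ at hsemi
  have h1 := abs_sub_le_scheffeSet hmeas hdens istar k hA
  have h2 := abs_sub_le_tvDist (H istar) P (measurableSet_scheffeSet hmeas istar k)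
  have h3 := abs_sub_le_tvDist (H istar) P hA
  have t1 := abs_sub_le ((H k).real A) ((H istar).real A) (P.real A)
  have t2 := abs_sub_le ((H k).real (scheffeSet h istar k)) (P.real (scheffeSet h istar k))
    ((H istar).real (scheffeSet h istar k))
  rw [abs_sub_comm (P.real _)] at t2
  linarith
end

section
/- Let P, H_1, ..., H_n be probability measures on a measurable space X with Scheffé sets S_{i,j}, let OPT := min over j of TV(H_j, P) be achieved by H_{i*}, and let sigma >= 0 and B >= 0. Suppose the empirical semi-distances are sigma-accurate, i.e. |ŵ_{i*}(H_j) - w_{i*}(H_j)| <= sigma for all j. Then for any hypothesis Ĥ = H_j with ŵ_{i*}(Ĥ) <= B, it holds that TV(Ĥ, P) <= 2·OPT + B + sigma. In particular, if ŵ_{i*}(Ĥ) <= OPT + sigma'' for some sigma'' >= 0, then TV(Ĥ, P) <= 3·OPT + sigma'' + sigma. -/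
/-! For two measures `F`, `G` of mass one with densities `f`, `g`, the Scheffé set `A = {f < g}`
attains the total variation distance: `G ≥ F` on subsets of `A` and `G ≤ F` on subsets of `Aᶜ`
(`abs_real_sub_le_of_hahn`). Hence for every measurable `S`, writing `H*` for the optimal
hypothesis and `A` for the Scheffé set of `H*` and `H j`,
`|H j S - P S| ≤ |H j A - H* A| + |H* S - P S| ≤ w(H j) + |H* A - P A| + |H* S - P S|`,
and the last two terms are each at most `OPT`, so `TV(H j, P) ≤ w(H j) + 2 OPT`
(`tvDist_le_semiDist_add`). Accuracy of the empirical semi-distances gives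
`w(H j) ≤ wEmp j + σ`. -/

open MeasureTheory ENNReal

lemma abs_real_sub_le_tvDist {X : Type*} [MeasurableSpace X] (P Q : Measure X)
    [IsProbabilityMeasure P] [IsProbabilityMeasure Q] {S : Set X} (hS : MeasurableSet S) :
    |(P S).toReal - (Q S).toReal| ≤ tvDist P Q := by
  unfold tvDist
  refine le_ciSup (f := fun S : {S : Set X // MeasurableSet S} =>
    |(P S.1).toReal - (Q S.1).toReal|) ⟨1, ?_⟩ ⟨S, hS⟩
  rintro _ ⟨T, rfl⟩
  have h1 : (P T.1).toReal ≤ 1 := measureReal_le_one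
  have h2 : (Q T.1).toReal ≤ 1 := measureReal_le_one
  have h3 : 0 ≤ (P T.1).toReal := ENNReal.toReal_nonneg
  have h4 : 0 ≤ (Q T.1).toReal := ENNReal.toReal_nonneg
  exact abs_le.2 ⟨by linarith, by linarith⟩

/-- If `(A, Aᶜ)` is a Hahn decomposition for `G - F`, then `A` maximizes `|F S - G S|`. -/
lemma abs_real_sub_le_of_hahn {X : Type*} [MeasurableSpace X] (F G : Measure X)
    [IsProbabilityMeasure F] [IsProbabilityMeasure G] {A S : Set X}
    (hA : MeasurableSet A) (hS : MeasurableSet S)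
    (hle : ∀ T ⊆ A, MeasurableSet T → F T ≤ G T)
    (hge : ∀ T ⊆ Aᶜ, MeasurableSet T → G T ≤ F T) :
    |F.real S - G.real S| ≤ |F.real A - G.real A| := by
  have key : ∀ S, MeasurableSet S → G.real S - F.real S ≤ G.real A - F.real A := by
    intro S hS
    have h1 : F.real (A \ S) ≤ G.real (A \ S) :=
      ENNReal.toReal_mono (measure_ne_top _ _) (hle _ Set.sdiff_subset (hA.diff hS))
    have h2 : G.real (S \ A) ≤ F.real (S \ A) :=
      ENNReal.toReal_mono (measure_ne_top _ _) (hge _ (fun _ hx => hx.2) (hS.diff hA))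
    have e1 := measureReal_inter_add_sdiff (μ := F) (s := S) hA
    have e2 := measureReal_inter_add_sdiff (μ := G) (s := S) hA
    have e3 := measureReal_inter_add_sdiff (μ := F) (s := A) hS
    have e4 := measureReal_inter_add_sdiff (μ := G) (s := A) hS
    rw [Set.inter_comm] at e3 e4
    linarith
  -- Equal total masses turn the bound for `Sᶜ` into the opposite bound for `S`.
  have k1 := key S hS
  have k2 := key Sᶜ hS.compl
  rw [probReal_compl_eq_one_sub hS, probReal_compl_eq_one_sub hS] at k2
  rw [abs_sub_comm (F.real A)]
  exact (abs_le.2 ⟨by linarith, by linarith⟩).trans (le_abs_self _)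

/-- The set `{f < g}` attains the total variation distance between the measures with densities
`f` and `g`. -/
lemma abs_real_sub_le_of_density {X : Type*} [MeasurableSpace X] (μ F G : Measure X)
    [IsProbabilityMeasure F] [IsProbabilityMeasure G] {f g : X → ℝ≥0∞}
    (hf : Measurable f) (hg : Measurable g)
    (hF : F = μ.withDensity f) (hG : G = μ.withDensity g) {S : Set X} (hS : MeasurableSet S) :
    |F.real S - G.real S| ≤ |F.real {x | f x < g x} - G.real {x | f x < g x}| := by
  refine abs_real_sub_le_of_hahn F G (measurableSet_lt hf hg) hS ?_ ?_
  · intro T hT hTm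
    rw [hF, hG, withDensity_apply _ hTm, withDensity_apply _ hTm]
    exact setLIntegral_mono hg fun x hx => (hT hx).le
  · intro T hT hTm
    rw [hF, hG, withDensity_apply _ hTm, withDensity_apply _ hTm]
    exact setLIntegral_mono hf fun x hx => not_lt.1 (hT hx)

lemma tvDist_le_semiDist_add {X : Type*} [MeasurableSpace X] (μ : Measure X) {n : ℕ}
    (H : Fin n → Measure X) [∀ i, IsProbabilityMeasure (H i)]
    (P : Measure X) [IsProbabilityMeasure P]
    (h : Fin n → X → ℝ≥0∞) (hmeas : ∀ i, Measurable (h i))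
    (hdens : ∀ i, H i = μ.withDensity (h i)) (i j : Fin n) :
    tvDist (H j) P ≤ semiDist h H P i j + 2 * tvDist (H i) P := by
  have hA : MeasurableSet (scheffeSet h i j) := by
    unfold scheffeSet
    split_ifs
    · exact measurableSet_lt (hmeas i) (hmeas j)
    · exact measurableSet_lt (hmeas j) (hmeas i)
  have : Nonempty {S : Set X // MeasurableSet S} := ⟨⟨∅, MeasurableSet.empty⟩⟩
  refine ciSup_le fun ⟨S, hS⟩ => ?_
  have h1 : |(H j S).toReal - (H i S).toReal| ≤
      |(H j (scheffeSet h i j)).toReal - (H i (scheffeSet h i j)).toReal| := by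
    unfold scheffeSet
    split_ifs
    · rw [abs_sub_comm, abs_sub_comm (H j _).toReal]
      exact abs_real_sub_le_of_density μ (H i) (H j) (hmeas i) (hmeas j) (hdens i) (hdens j) hS
    · exact abs_real_sub_le_of_density μ (H j) (H i) (hmeas j) (hmeas i) (hdens j) (hdens i) hS
  have h2 := abs_real_sub_le_tvDist (H i) P hS
  have h3 := abs_real_sub_le_tvDist (H i) P hA
  have h4 := abs_sub_le (H j S).toReal (H i S).toReal (P S).toReal
  have h5 := abs_sub_le (H j (scheffeSet h i j)).toReal (P (scheffeSet h i j)).toReal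
    (H i (scheffeSet h i j)).toReal
  rw [abs_sub_comm (P _).toReal] at h5
  unfold semiDist
  dsimp only
  linarith

/-- If the empirical semi-distances against the optimal hypothesis `H_{i*}`
are `σ`-accurate, then any hypothesis `Ĥ = H j` with `ŵ_{i*}(Ĥ) ≤ B`
satisfies `TV(Ĥ, P) ≤ 2·OPT + B + σ`; in particular, if
`ŵ_{i*}(Ĥ) ≤ OPT + σ''` then `TV(Ĥ, P) ≤ 3·OPT + σ'' + σ`. -/
theorem low_empirical_semiDist_implies_close {X : Type*} [MeasurableSpace X]
    (μ : Measure X) [SigmaFinite μ] {n : ℕ} (hn : 0 < n)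
    (H : Fin n → Measure X) [∀ i, IsProbabilityMeasure (H i)]
    (P : Measure X) [IsProbabilityMeasure P]
    (h : Fin n → X → ℝ≥0∞) (hmeas : ∀ i, Measurable (h i))
    (hdens : ∀ i, H i = μ.withDensity (h i))
    (istar : Fin n) (hopt : ∀ j, tvDist (H istar) P ≤ tvDist (H j) P)
    (σ : ℝ) (hσ : 0 ≤ σ) (B : ℝ) (hB : 0 ≤ B)
    (wEmp : Fin n → ℝ)
    (hacc : ∀ j, |wEmp j - semiDist h H P istar j| ≤ σ) :
    (∀ j : Fin n, wEmp j ≤ B →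
      tvDist (H j) P ≤ 2 * tvDist (H istar) P + B + σ) ∧
    (∀ (σ'' : ℝ), 0 ≤ σ'' → ∀ j : Fin n,
      wEmp j ≤ tvDist (H istar) P + σ'' →
      tvDist (H j) P ≤ 3 * tvDist (H istar) P + σ'' + σ) := by
  have key := tvDist_le_semiDist_add μ H P h hmeas hdens istar
  refine ⟨fun j hj => ?_, fun σ'' _ j hj => ?_⟩ <;>
  · have h1 := (abs_le.1 (hacc j)).1
    have h2 := key j
    linarith
end
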